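/- arXiv:2309.12176 — 3 statements merged into one kernel-verified Lean document; each statement's English description precedes it below -/
import Mathlib

section
/- Let K be a commutative ring and f ∈ K[X] a polynomial. Let u ∈ K[z₁,z₂] be the divided difference of f, i.e., the unique polynomial satisfying (z₁ − z₂)·u = f(z₁) − f(z₂) (it exists and is unique since z₁ − z₂ is a nonzerodivisor in K[z₁,z₂]). Then (z₁ − z₂)⁴ · ( u · ∂₁∂₂u − (∂₁u)·(∂₂u) ) = f'(z₁) · f'(z₂) · (z₁ − z₂)² − (f(z₁) − f(z₂))², where f' is the formal derivative of f and ∂₁, ∂₂ denote partial derivatives with respect to z₁, z₂. -/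
open MvPolynomial

/-! After clearing denominators, `∂₁∂₂ log` still turns products into sums, so it can be applied to
`f(z₁) - f(z₂) = (z₁ - z₂) · u`. On a difference `a(z₁) - b(z₂)` its second-order part vanishes and
only `a'(z₁) b'(z₂)` is left, which evaluates it on both `f(z₁) - f(z₂)` and `z₁ - z₂`. -/

section MixedLogDeriv

variable {R A : Type*} [CommSemiring R] [CommRing A] [Algebra R A] (D₁ D₂ : Derivation R A A)

/-- The mixed logarithmic derivative `∂₁∂₂ log g` multiplied by `g ^ 2`, for derivations `D₁`, `D₂`
in place of `∂₁`, `∂₂`. Clearing the denominator makes it meaningful even when `g` is not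
invertible. -/
def mixedLogDerivNum (g : A) : A :=
  g * D₁ (D₂ g) - D₁ g * D₂ g

theorem mixedLogDerivNum_mul (g h : A) :
    mixedLogDerivNum D₁ D₂ (g * h) =
      g ^ 2 * mixedLogDerivNum D₁ D₂ h + h ^ 2 * mixedLogDerivNum D₁ D₂ g := by
  simp only [mixedLogDerivNum, Derivation.leibniz, map_add, smul_eq_mul]
  ring

variable {D₁ D₂}

theorem mixedLogDerivNum_sub_of_separated {a b : A} (ha : D₂ a = 0) (hb : D₁ b = 0)
    (hb' : D₁ (D₂ b) = 0) :
    mixedLogDerivNum D₁ D₂ (a - b) = D₁ a * D₂ b := by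
  simp only [mixedLogDerivNum, map_sub, map_zero, ha, hb, hb']
  ring

theorem mixedLogDerivNum_aeval_sub_aeval {x y : A} (h₁x : D₁ x = 1) (h₂x : D₂ x = 0)
    (h₁y : D₁ y = 0) (h₂y : D₂ y = 1) (p q : Polynomial R) :
    mixedLogDerivNum D₁ D₂ (Polynomial.aeval x p - Polynomial.aeval y q) =
      Polynomial.aeval x p.derivative * Polynomial.aeval y q.derivative := by
  have D₁_aeval_y (r : Polynomial R) : D₁ (Polynomial.aeval y r) = 0 := by
    rw [Derivation.map_aeval, h₁y, smul_zero]
  have D₂_aeval_x : D₂ (Polynomial.aeval x p) = 0 := by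
    rw [Derivation.map_aeval, h₂x, smul_zero]
  have D₁_aeval_x : D₁ (Polynomial.aeval x p) = Polynomial.aeval x p.derivative := by
    rw [Derivation.map_aeval, h₁x, smul_eq_mul, mul_one]
  have D₂_aeval_y : D₂ (Polynomial.aeval y q) = Polynomial.aeval y q.derivative := by
    rw [Derivation.map_aeval, h₂y, smul_eq_mul, mul_one]
  rw [mixedLogDerivNum_sub_of_separated D₂_aeval_x (D₁_aeval_y q)
    (by rw [D₂_aeval_y, D₁_aeval_y]), D₁_aeval_x, D₂_aeval_y]

theorem divided_difference_log_identity_general {x y u : A} (h₁x : D₁ x = 1) (h₂x : D₂ x = 0)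
    (h₁y : D₁ y = 0) (h₂y : D₂ y = 1) (f : Polynomial R)
    (hu : (x - y) * u = Polynomial.aeval x f - Polynomial.aeval y f) :
    (x - y) ^ 4 * (u * D₁ (D₂ u) - D₁ u * D₂ u) =
      Polynomial.aeval x f.derivative * Polynomial.aeval y f.derivative * (x - y) ^ 2 -
        (Polynomial.aeval x f - Polynomial.aeval y f) ^ 2 := by
  have num_sub : mixedLogDerivNum D₁ D₂ (x - y) = 1 := by
    simpa using mixedLogDerivNum_aeval_sub_aeval h₁x h₂x h₁y h₂y Polynomial.X Polynomial.X
  have num_factored : Polynomial.aeval x f.derivative * Polynomial.aeval y f.derivative =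
      (x - y) ^ 2 * mixedLogDerivNum D₁ D₂ u + u ^ 2 := by
    rw [← mixedLogDerivNum_aeval_sub_aeval h₁x h₂x h₁y h₂y, ← hu, mixedLogDerivNum_mul, num_sub,
      mul_one]
  rw [num_factored, ← hu, mixedLogDerivNum]
  ring

end MixedLogDeriv

/-- Denominator-cleared form of the identity
`∂₁∂₂ log((f(z₁)-f(z₂))/(z₁-z₂)) = f'(z₁)f'(z₂)/(f(z₁)-f(z₂))² - 1/(z₁-z₂)²`:
if `u` is the divided difference of a polynomial `f`, i.e. `(z₁ - z₂)·u = f(z₁) - f(z₂)`,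
then `(z₁-z₂)⁴ (u·∂₁∂₂u - ∂₁u·∂₂u) = f'(z₁)f'(z₂)(z₁-z₂)² - (f(z₁)-f(z₂))²`. -/
theorem divided_difference_log_identity (K : Type*) [CommRing K] (f : Polynomial K)
    (u : MvPolynomial (Fin 2) K)
    (hu : ((X 0 : MvPolynomial (Fin 2) K) - X 1) * u =
      Polynomial.aeval (X 0 : MvPolynomial (Fin 2) K) f -
        Polynomial.aeval (X 1 : MvPolynomial (Fin 2) K) f) :
    ((X 0 : MvPolynomial (Fin 2) K) - X 1) ^ 4 *
        (u * pderiv 0 (pderiv 1 u) - pderiv 0 u * pderiv 1 u) =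
      Polynomial.aeval (X 0 : MvPolynomial (Fin 2) K) f.derivative *
          Polynomial.aeval (X 1 : MvPolynomial (Fin 2) K) f.derivative *
          ((X 0 : MvPolynomial (Fin 2) K) - X 1) ^ 2 -
        (Polynomial.aeval (X 0 : MvPolynomial (Fin 2) K) f -
          Polynomial.aeval (X 1 : MvPolynomial (Fin 2) K) f) ^ 2 := by
  exact divided_difference_log_identity_general (pderiv_X_self 0) (pderiv_X_of_ne (by decide))
    (pderiv_X_of_ne (by decide)) (pderiv_X_self 1) f hu
end

section
/- Let K be a commutative ring and f ∈ K[X] a polynomial. Then in K[z₁,z₂] the polynomial (z₁ − z₂)⁴ divides f'(z₁) · f'(z₂) · (z₁ − z₂)² − (f(z₁) − f(z₂))², where f' is the formal derivative and f(z₁), f(z₂) denote the evaluations of f at the two variables. -/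
open MvPolynomial

/-!
Put `h = x - y` and write `f(x) = f(y) + f'(y) h + a h² + O(h³)`, where `a = f''(y) / 2` makes sense
over any ring as a Hasse derivative, so that `f'(x) = f'(y) + 2 a h + O(h²)`. Then `f'(x) f'(y) h²`
and `(f(x) - f(y))²` are both equal to `f'(y)² h² + 2 a f'(y) h³` modulo `h⁴`.
-/

theorem sub_pow_dvd_eval_sub_sum_hasseDeriv {R : Type*} [CommRing R] (p : Polynomial R) (x y : R)
    (n : ℕ) :
    (x - y) ^ n ∣
      p.eval x - ∑ i ∈ Finset.range n, (Polynomial.hasseDeriv i p).eval y * (x - y) ^ i := by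
  let jet : Polynomial R :=
    ∑ i ∈ Finset.range n, Polynomial.monomial i ((Polynomial.taylor y p).coeff i)
  have X_pow_dvd : Polynomial.X ^ n ∣ Polynomial.taylor y p - jet := by
    refine Polynomial.X_pow_dvd_iff.mpr fun d hd => ?_
    simp [jet, Polynomial.finsetSum_coeff, Polynomial.coeff_monomial, hd]
  simpa [jet, Polynomial.eval_finsetSum, Polynomial.taylor_eval, Polynomial.taylor_coeff]
    using Polynomial.eval_dvd (x := x - y) X_pow_dvd

theorem derivative_derivative_eq_two_nsmul_hasseDeriv {R : Type*} [Semiring R]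
    (p : Polynomial R) : p.derivative.derivative = 2 • Polynomial.hasseDeriv 2 p :=
  (congrFun (Polynomial.factorial_smul_hasseDeriv (R := R) 2) p).symm

theorem sub_sq_dvd_eval_derivative_sub {R : Type*} [CommRing R] (p : Polynomial R) (x y : R) :
    (x - y) ^ 2 ∣ p.derivative.eval x -
      (p.derivative.eval y + 2 * (Polynomial.hasseDeriv 2 p).eval y * (x - y)) := by
  simpa [Finset.sum_range_succ, derivative_derivative_eq_two_nsmul_hasseDeriv]
    using sub_pow_dvd_eval_sub_sum_hasseDeriv p.derivative x y 2

theorem sub_pow_three_dvd_eval_sub {R : Type*} [CommRing R] (p : Polynomial R) (x y : R) :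
    (x - y) ^ 3 ∣ p.eval x - (p.eval y + p.derivative.eval y * (x - y) +
      (Polynomial.hasseDeriv 2 p).eval y * (x - y) ^ 2) := by
  simpa [Finset.sum_range_succ] using sub_pow_dvd_eval_sub_sum_hasseDeriv p x y 3

theorem sub_pow_four_dvd_eval_derivative_mul_sub_sq {R : Type*} [CommRing R]
    (p : Polynomial R) (x y : R) :
    (x - y) ^ 4 ∣ p.derivative.eval x * p.derivative.eval y * (x - y) ^ 2 -
      (p.eval x - p.eval y) ^ 2 := by
  obtain ⟨c, hc⟩ := sub_pow_three_dvd_eval_sub p x y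
  obtain ⟨d, hd⟩ := sub_sq_dvd_eval_derivative_sub p x y
  rw [eq_add_of_sub_eq hc, eq_add_of_sub_eq hd]
  generalize p.derivative.eval y = b, (Polynomial.hasseDeriv 2 p).eval y = a, x - y = h
  exact ⟨b * d - 2 * b * c - (a + c * h) ^ 2, by ring⟩

theorem bergman_difference_divisibility_general {K A : Type*} [CommSemiring K] [CommRing A]
    [Algebra K A] (f : Polynomial K) (x y : A) :
    (x - y) ^ 4 ∣
      Polynomial.aeval x f.derivative * Polynomial.aeval y f.derivative * (x - y) ^ 2 -
        (Polynomial.aeval x f - Polynomial.aeval y f) ^ 2 := by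
  simpa only [Polynomial.derivative_map, Polynomial.eval_map_algebraMap]
    using sub_pow_four_dvd_eval_derivative_mul_sub_sq (f.map (algebraMap K A)) x y

/-- Regularity of the difference of Bergman kernels along the diagonal, in polynomial form:
for any polynomial `f` over a commutative ring `K`, the polynomial `(z₁ - z₂)⁴` divides
`f'(z₁) f'(z₂) (z₁ - z₂)² - (f(z₁) - f(z₂))²` in `K[z₁, z₂]`. -/
theorem bergman_difference_divisibility (K : Type*) [CommRing K] (f : Polynomial K) :
    ((X 0 : MvPolynomial (Fin 2) K) - X 1) ^ 4 ∣
      Polynomial.aeval (X 0 : MvPolynomial (Fin 2) K) f.derivative *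
          Polynomial.aeval (X 1 : MvPolynomial (Fin 2) K) f.derivative *
          ((X 0 : MvPolynomial (Fin 2) K) - X 1) ^ 2 -
        (Polynomial.aeval (X 0 : MvPolynomial (Fin 2) K) f -
          Polynomial.aeval (X 1 : MvPolynomial (Fin 2) K) f) ^ 2 :=
  bergman_difference_divisibility_general f (X 0) (X 1)
end

section
/- Let U ⊆ ℂ, let f : ℂ → ℂ, and let t₀, t₁, t₂ ∈ ℂ be pairwise distinct. If for each m ∈ {0,1,2} the function z ↦ (1 − t_m · f(z))² is meromorphic on U, then f is meromorphic on U. -/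
/-!
For fixed `z`, the function `t ↦ (1 - t f(z)) ^ n` is a polynomial in `t` of degree at most `n`
whose linear coefficient is `-n f(z)`. Lagrange interpolation writes each coefficient of a
polynomial of degree at most `n` as a linear combination of its values at `n + 1` distinct nodes,
with weights depending only on the nodes, hence not on `z`.
-/

section

open Polynomial

variable {𝕜 𝕜' ι : Type*} [NontriviallyNormedField 𝕜] [NontriviallyNormedField 𝕜']
  [NormedAlgebra 𝕜 𝕜'] {U : Set 𝕜} {s : Finset ι} {v : ι → 𝕜'}

theorem coeff_eq_sum_eval_mul_coeff_basis {F : Type*} [Field F] [DecidableEq ι] {v : ι → F}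
    (hv : Set.InjOn v s) {p : F[X]} (hp : p.degree < s.card) (k : ℕ) :
    p.coeff k = ∑ i ∈ s, p.eval (v i) * (Lagrange.basis s v i).coeff k := by
  conv_lhs => rw [Lagrange.eq_interpolate hv hp]
  simp only [Lagrange.interpolate_apply, finsetSum_coeff, coeff_C_mul]

theorem meromorphicOn_coeff_of_eval (hv : Set.InjOn v s) {p : 𝕜 → 𝕜'[X]}
    (hp : ∀ z, (p z).degree < s.card)
    (h : ∀ i ∈ s, MeromorphicOn (fun z ↦ (p z).eval (v i)) U) (k : ℕ) :
    MeromorphicOn (fun z ↦ (p z).coeff k) U := by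
  classical
  intro x hx
  simp only [coeff_eq_sum_eval_mul_coeff_basis hv (hp _) k]
  exact .fun_sum fun i hi ↦ (h i hi x hx).fun_mul (.const _ x)

theorem degree_comp_C_mul_X_le {R : Type*} [Semiring R] (q : R[X]) (a : R) :
    (q.comp (C a * X)).degree ≤ q.degree := by
  refine (degree_le_iff_coeff_zero _ _).2 fun k hk ↦ ?_
  rw [comp_C_mul_X_coeff, coeff_eq_zero_of_degree_lt hk, zero_mul]

theorem meromorphicOn_pow_of_eval_mul (hv : Set.InjOn v s) {q : 𝕜'[X]} (hq : q.degree < s.card)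
    {k : ℕ} (hk : q.coeff k ≠ 0) {f : 𝕜 → 𝕜'}
    (h : ∀ i ∈ s, MeromorphicOn (fun z ↦ q.eval (v i * f z)) U) :
    MeromorphicOn (fun z ↦ f z ^ k) U := by
  have hcoeff : MeromorphicOn (fun z ↦ (q.comp (C (f z) * X)).coeff k) U :=
    meromorphicOn_coeff_of_eval hv (fun z ↦ (degree_comp_C_mul_X_le q (f z)).trans_lt hq)
      (by simpa only [eval_comp, eval_mul, eval_C, eval_X, mul_comm] using h) k
  simpa only [comp_C_mul_X_coeff, Pi.smul_def, smul_eq_mul, inv_mul_cancel_left₀ hk]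
    using hcoeff.const_smul (q.coeff k)⁻¹

theorem meromorphic_of_squares_general (U : Set 𝕜) (f : 𝕜 → 𝕜') {n : ℕ}
    (hn : (n : 𝕜') ≠ 0) (t : Fin (n + 1) → 𝕜') (ht : Function.Injective t)
    (h : ∀ m, MeromorphicOn (fun z ↦ (1 - t m * f z) ^ n) U) : MeromorphicOn f U := by
  have hdegree : ((1 + X : 𝕜'[X]) ^ n).degree < (Finset.univ : Finset (Fin (n + 1))).card := by
    rw [Finset.card_fin, add_comm, ← C_1, degree_pow, degree_X_add_C, nsmul_one]
    exact_mod_cast n.lt_succ_self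
  have hcoeff : ((1 + X : 𝕜'[X]) ^ n).coeff 1 ≠ 0 := by
    rwa [coeff_one_add_X_pow, Nat.choose_one_right]
  have hneg : MeromorphicOn (fun z ↦ (-f) z ^ 1) U :=
    meromorphicOn_pow_of_eval_mul ht.injOn hdegree hcoeff fun m _ ↦ by
      simpa only [eval_pow, eval_add, eval_one, eval_X, Pi.neg_apply, mul_neg, ← sub_eq_add_neg]
        using h m
  simpa only [pow_one, MeromorphicOn.neg_iff] using hneg

end

/-- If `(1 - t_m f)²` is meromorphic on `U` for three pairwise distinct values
`t₀, t₁, t₂`, then `f` is meromorphic on `U`. -/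
theorem meromorphic_of_squares (U : Set ℂ) (f : ℂ → ℂ)
    (t : Fin 3 → ℂ) (ht : Function.Injective t)
    (h : ∀ m : Fin 3, MeromorphicOn (fun z => (1 - t m * f z) ^ 2) U) :
    MeromorphicOn f U :=
  meromorphic_of_squares_general U f two_ne_zero t ht h
end
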